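/- Let G be the CPDAG of the Markov equivalence class of a DAG, and let X and V be distinct nodes joined by an undirected edge in G (i.e., V ∈ Sib_G(X)). Then Pa_G(X) ⊆ Pa_G(V): every node with a directed edge into X in G also has a directed edge into V in G. -/

import Mathlib

/-- A directed acyclic graph on node set `V`: a directed edge relation with no
directed cycles (no edge `a → b` together with a directed path from `b` back to `a`). -/
structure Dag (V : Type*) where
  edge : V → V → Prop
  acyclic : ∀ a b : V, edge a b → ¬ Relation.ReflTransGen edge b a

variable {V : Type*}

namespace Dag

/-- `a` is an ancestor of `b` (equivalently, `b` is a descendant of `a`):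
there is a directed path from `a` to `b`; every node is its own ancestor. -/
def Anc (D : Dag V) (a b : V) : Prop := Relation.ReflTransGen D.edge a b

/-- `a` and `b` are adjacent (joined by an edge in either direction). -/
def Adj (D : Dag V) (a b : V) : Prop := D.edge a b ∨ D.edge b a

/-- The parents of `x` in the DAG `D`. -/
def Pa (D : Dag V) (x : V) : Set V := {a | D.edge a x}

/-- The Markov blanket of `x`: parents, children, and parents of children of `x`
(excluding `x` itself). -/
def MB (D : Dag V) (x : V) : Set V :=
  {v | v ≠ x ∧ (D.edge v x ∨ D.edge x v ∨ ∃ c : V, D.edge x c ∧ D.edge v c)}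

end Dag

/-- A path between `x` and `y` with respect to an adjacency relation `A`:
a sequence of distinct nodes, starting at `x` and ending at `y`, in which
consecutive nodes are adjacent. `n` is the number of edges of the path. -/
structure GPath (A : V → V → Prop) (x y : V) where
  n : ℕ
  f : Fin (n + 1) → V
  inj : Function.Injective f
  first : f ⟨0, by omega⟩ = x
  last : f ⟨n, by omega⟩ = y
  adj : ∀ i : Fin n, A (f i.castSucc) (f i.succ)

namespace GPath

/-- The non-endpoint node at position `i` of the path `p` is a collider with respect
to the directed edge relation `E`: both incident edges of the path point into it. -/
def ColliderAt {A : V → V → Prop} {x y : V} (p : GPath A x y)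
    (E : V → V → Prop) (i : ℕ) : Prop :=
  ∃ (_ : 0 < i) (_ : i < p.n),
    E (p.f ⟨i - 1, by omega⟩) (p.f ⟨i, by omega⟩) ∧
    E (p.f ⟨i + 1, by omega⟩) (p.f ⟨i, by omega⟩)

/-- The path `p` is blocked by the node set `S` in the DAG `D`: it contains a
non-collider that lies in `S`, or a collider such that neither the collider nor any
of its descendants lies in `S`. -/
def Blocked {A : V → V → Prop} {x y : V} (p : GPath A x y)
    (D : Dag V) (S : Set V) : Prop :=
  ∃ (i : ℕ) (_ : 0 < i) (_ : i < p.n),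
    (¬ p.ColliderAt D.edge i ∧ p.f ⟨i, by omega⟩ ∈ S) ∨
    (p.ColliderAt D.edge i ∧ ∀ d : V, D.Anc (p.f ⟨i, by omega⟩) d → d ∉ S)

end GPath

namespace Dag

/-- `x` and `y` are d-separated by `S` in the DAG `D`: every path between `x` and `y`
is blocked by `S`. -/
def dSep (D : Dag V) (x y : V) (S : Set V) : Prop :=
  ∀ p : GPath D.Adj x y, p.Blocked D S

/-- Two DAGs on the same node set are Markov equivalent if they have exactly the same
d-separation relations. -/
def MEquiv (D D' : Dag V) : Prop :=
  ∀ (x y : V) (S : Set V), D.dSep x y S ↔ D'.dSep x y S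

/-- The edge between `a` and `b` is directed `a → b` in the CPDAG of the Markov
equivalence class of `D`: the edge `a → b` holds in every DAG Markov equivalent to `D`. -/
def CpDir (D : Dag V) (a b : V) : Prop :=
  ∀ D' : Dag V, D.MEquiv D' → D'.edge a b

/-- The edge between `a` and `b` is undirected (`a − b`) in the CPDAG: `a` and `b` are
adjacent (the CPDAG has the same adjacencies as the DAGs of the MEC) but the edge is not
directed either way in the CPDAG. -/
def CpUndir (D : Dag V) (a b : V) : Prop :=
  D.Adj a b ∧ ¬ D.CpDir a b ∧ ¬ D.CpDir b a

/-- `Pa_G(a)`: the nodes with a directed edge into `a` in the CPDAG. -/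
def CpPa (D : Dag V) (a : V) : Set V := {p | D.CpDir p a}

/-- `Ch_G(a)`: the nodes `b` with the edge directed `a → b` in the CPDAG. -/
def CpCh (D : Dag V) (a : V) : Set V := {c | D.CpDir a c}

/-- `Sib_G(a)`: the nodes joined to `a` by an undirected edge in the CPDAG. -/
def CpSib (D : Dag V) (a : V) : Set V := {s | D.CpUndir a s}

end Dag

namespace GPath

/-- `p` is a possibly directed path in the CPDAG: no edge on it is directed
backwards (as `V_i ← V_{i+1}`) in the CPDAG. -/
def CpPossiblyDirected {D : Dag V} {x y : V} (p : GPath D.Adj x y) : Prop :=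
  ∀ i : Fin p.n, ¬ D.CpDir (p.f i.succ) (p.f i.castSucc)

/-- `p` is a (fully) directed path in the CPDAG: every edge on it is directed
forwards in the CPDAG. -/
def CpDirected {D : Dag V} {x y : V} (p : GPath D.Adj x y) : Prop :=
  ∀ i : Fin p.n, D.CpDir (p.f i.castSucc) (p.f i.succ)

/-- `p` is a directed path from `x` to `y` in the DAG `D` itself. -/
def DirectedIn {D : Dag V} {x y : V} (p : GPath D.Adj x y) : Prop :=
  ∀ i : Fin p.n, D.edge (p.f i.castSucc) (p.f i.succ)

/-- `p` is unshielded: for every three consecutive nodes on it, the first and the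
third are non-adjacent. -/
def Unshielded {D : Dag V} {x y : V} (p : GPath D.Adj x y) : Prop :=
  ∀ (i : ℕ) (_ : i + 2 ≤ p.n), ¬ D.Adj (p.f ⟨i, by omega⟩) (p.f ⟨i + 2, by omega⟩)

end GPath

namespace Dag

/-- `x` is a possible ancestor of `y` in the CPDAG: there is a possibly directed path
from `x` to `y`. -/
def PossAn (D : Dag V) (x y : V) : Prop :=
  ∃ p : GPath D.Adj x y, p.CpPossiblyDirected

/-- `x` is an explicit ancestor of `y` in the CPDAG: there is a fully directed path
from `x` to `y` in the CPDAG. -/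
def ExplAn (D : Dag V) (x y : V) : Prop :=
  ∃ p : GPath D.Adj x y, p.CpDirected

/-- The CPDAG is amenable relative to `(x, y)`: every possibly directed path from
`x` to `y` starts with a directed edge out of `x`. -/
def Amenable (D : Dag V) (x y : V) : Prop :=
  ∀ p : GPath D.Adj x y, p.CpPossiblyDirected →
    ∀ _ : 0 < p.n, D.CpDir (p.f ⟨0, by omega⟩) (p.f ⟨1, by omega⟩)

/-- `S` is a valid adjustment set for `(x, y)` in the DAG `D`:
(i) no element of `S` is a descendant of any node `w ≠ x` lying on a directed path
from `x` to `y`, and (ii) every path between `x` and `y` that is not a directed path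
from `x` to `y` is blocked by `S`. -/
def ValidAdjustment (D : Dag V) (x y : V) (S : Set V) : Prop :=
  (∀ s ∈ S, ∀ w : V, w ≠ x → D.Anc x w → D.Anc w y → ¬ D.Anc w s) ∧
  (∀ p : GPath D.Adj x y, ¬ p.DirectedIn → p.Blocked D S)

/-- `Cn_D(x, y)`: the nodes `w ≠ x` lying on some directed path from `x` to `y` in `D`. -/
def Cn (D : Dag V) (x y : V) : Set V := {w | w ≠ x ∧ D.Anc x w ∧ D.Anc w y}

end Dag

/-!
Two DAGs are Markov equivalent iff they have the same adjacencies and the same unshielded colliders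
(Verma–Pearl). From left to right, d-separation recovers this pattern: it is a reachability relation
of open walks, which may be followed edge by edge (the Bayes ball). From right to left, two DAGs
with the same pattern are joined by a sequence of reversals of covered edges, and such a reversal
only reroutes the Bayes ball locally.

Hence every orientation forced by Meek's rules from the pattern is directed in the CPDAG. For the
converse, a Meek orientation `a → b` followed by an edge `b − c` left undirected by the rules forces
`a → c`, by induction on the derivation of `a → b`. So the undirected edges stay within the levels
of a ranking by Meek orientations, and they form a chordal graph, which can be directed without
unshielded colliders away from any chosen node: none of its edges is directed in the CPDAG. The
CPDAG thus consists of the Meek orientations, for which the claim is the fact just stated.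
-/

section Chordal

variable {G : SimpleGraph V} {T K : Set V} {s v : V}

/-- `s` is a simplicial vertex of the subgraph of `G` induced on `T`. -/
def IsSimplicialIn (G : SimpleGraph V) (T : Set V) (s : V) : Prop :=
  s ∈ T ∧ G.IsClique (G.neighborSet s ∩ T)

/-- Chordality, in the form which for finite graphs is equivalent to the absence of chordless
cycles of length at least four: every nonempty induced subgraph has a simplicial vertex. -/
def IsChordal (G : SimpleGraph V) : Prop :=
  ∀ T : Set V, T.Nonempty → ∃ s, IsSimplicialIn G T s

/-- `r` numbers the vertices in `T` injectively such that the earlier neighbours of each vertex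
form a clique, i.e. it is the reverse of a perfect elimination ordering of the subgraph of `G`
induced on `T`. -/
structure IsPerfectRanking (G : SimpleGraph V) (T : Set V) (r : V → ℕ) : Prop where
  injOn : T.InjOn r
  isClique : ∀ b ∈ T, G.IsClique {a ∈ T | G.Adj a b ∧ r a < r b}

theorem IsSimplicialIn.of_isClique (hT : G.IsClique T) (hs : s ∈ T) :
    IsSimplicialIn G T s :=
  ⟨hs, .subset Set.inter_subset_right hT⟩

theorem IsSimplicialIn.of_diff_singleton {u : V} (hu : IsSimplicialIn G (T \ {s}) u)
    (hus : ¬ G.Adj u s) : IsSimplicialIn G T u := by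
  have hne {a : V} (ha : G.Adj u a) : a ≠ s := by
    rintro rfl
    exact hus ha
  exact ⟨hu.1.1, fun a ha b hb => hu.2 ⟨ha.1, ha.2, hne ha.1⟩ ⟨hb.1, hb.2, hne hb.1⟩⟩

theorem IsSimplicialIn.isClique_of_subset (hs : IsSimplicialIn G T s)
    (hT : T \ {s} ⊆ G.neighborSet s) : G.IsClique T := by
  have hclique : G.IsClique (insert s (T \ {s})) :=
    SimpleGraph.IsClique.insert (hs.2.subset (Set.subset_inter hT Set.sdiff_subset))
      fun a ha _ => hT ha
  rwa [Set.insert_sdiff_singleton, Set.insert_eq_of_mem hs.1] at hclique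

theorem IsChordal.exists_isSimplicialIn_notMem [Finite V] (hG : IsChordal G) (hK : G.IsClique K)
    (hTK : ¬ T ⊆ K) : ∃ s, IsSimplicialIn G T s ∧ s ∉ K := by
  induction T using WellFoundedLT.induction generalizing K with
  | ind T ih =>
    obtain ⟨s, hs⟩ := hG T (Set.nonempty_iff_ne_empty.2 fun h => hTK (h ▸ Set.empty_subset K))
    by_cases hsK : s ∈ K
    · by_cases hadj : T \ {s} ⊆ G.neighborSet s
      · obtain ⟨u, huT, huK⟩ := Set.not_subset.1 hTK
        exact ⟨u, IsSimplicialIn.of_isClique (hs.isClique_of_subset hadj) huT, huK⟩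
      · obtain ⟨u, hu, hus⟩ := ih (T \ {s}) (Set.sdiff_singleton_ssubset.2 hs.1) hs.2
          fun h => hadj fun a ha => (h ha).1
        have hnadj : ¬ G.Adj s u := fun h => hus ⟨h, hu.1.1⟩
        exact ⟨u, hu.of_diff_singleton fun h => hnadj h.symm,
          fun huK => hnadj (hK hsK huK (Ne.symm hu.1.2))⟩
    · exact ⟨s, hs, hsK⟩

theorem IsPerfectRanking.update [DecidableEq V] {r : V → ℕ} {m : ℕ} (hs : IsSimplicialIn G T s)
    (hr : IsPerfectRanking G (T \ {s}) r) (hm : ∀ a, r a < m) :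
    IsPerfectRanking G T (Function.update r s m) where
  injOn := by
    intro a ha b hb hab
    by_contra hne
    rcases eq_or_ne a s with rfl | has
    · rw [Function.update_self, Function.update_of_ne (Ne.symm hne)] at hab
      exact (hm b).ne' hab
    rcases eq_or_ne b s with rfl | hbs
    · rw [Function.update_self, Function.update_of_ne has] at hab
      exact (hm a).ne hab
    · rw [Function.update_of_ne has, Function.update_of_ne hbs] at hab
      exact hne (hr.injOn ⟨ha, has⟩ ⟨hb, hbs⟩ hab)
  isClique b hb := by
    rcases eq_or_ne b s with rfl | hbs
    · exact fun a ha c hc => hs.2 ⟨ha.2.1.symm, ha.1⟩ ⟨hc.2.1.symm, hc.1⟩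
    · refine .subset (fun a ⟨haT, hab, hlt⟩ => ?_) (hr.isClique b ⟨hb, hbs⟩)
      rw [Function.update_of_ne hbs] at hlt
      rcases eq_or_ne a s with rfl | has
      · rw [Function.update_self] at hlt
        exact absurd hlt (hm b).not_gt
      · rw [Function.update_of_ne has] at hlt
        exact ⟨⟨haT, has⟩, hab, hlt⟩

theorem IsChordal.exists_isPerfectRanking [Finite V] (hG : IsChordal G) (hv : v ∈ T) :
    ∃ r, IsPerfectRanking G T r ∧ ∀ a ∈ T, a ≠ v → r v < r a := by
  classical
  induction T using WellFoundedLT.induction with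
  | ind T ih =>
    by_cases hT : T ⊆ {v}
    · have hsub : T.Subsingleton := Set.subsingleton_singleton.anti hT
      exact ⟨0, ⟨hsub.injOn 0, fun b _ => (hsub.anti (Set.sep_subset _ _)).pairwise _⟩,
        fun a ha hav => absurd (hT ha) hav⟩
    · obtain ⟨s, hs, hsv⟩ := hG.exists_isSimplicialIn_notMem (Set.pairwise_singleton v _) hT
      obtain ⟨r, hr, hroot⟩ := ih (T \ {s}) (Set.sdiff_singleton_ssubset.2 hs.1) ⟨hv, Ne.symm hsv⟩
      obtain ⟨m, hm⟩ := (Set.finite_range r).bddAbove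
      have hlt (a : V) : r a < m + 1 := Nat.lt_succ_of_le (hm ⟨a, rfl⟩)
      refine ⟨Function.update r s (m + 1), hr.update hs hlt, fun a ha hav => ?_⟩
      rw [Function.update_of_ne (Ne.symm hsv)]
      rcases eq_or_ne a s with rfl | has
      · rw [Function.update_self]
        exact hlt v
      · rw [Function.update_of_ne has]
        exact hroot a ⟨ha, has⟩ hav

end Chordal

namespace Dag

open Relation

section Basic

variable {D : Dag V} {a b c : V}

theorem edge_irrefl (D : Dag V) (a : V) : ¬ D.edge a a := fun h => D.acyclic a a h .refl

theorem edge_asymm (h : D.edge a b) : ¬ D.edge b a := fun h' => D.acyclic a b h (.single h')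

theorem edge_trans_of_adj (hab : D.edge a b) (hbc : D.edge b c) (hac : D.Adj a c) : D.edge a c :=
  hac.resolve_right fun hca => D.acyclic a b hab (.head hbc (.single hca))

theorem Adj.symm (h : D.Adj a b) : D.Adj b a := Or.symm h

theorem Adj.ne (h : D.Adj a b) : a ≠ b := by
  rintro rfl
  exact h.elim (D.edge_irrefl a) (D.edge_irrefl a)

/-- The DAG of a relation along which some rank strictly increases. -/
def ofRank {α : Type*} [Preorder α] (E : V → V → Prop) (f : V → α)
    (hf : ∀ a b, E a b → f a < f b) : Dag V where
  edge := E
  acyclic a b hab hba := (hf a b hab).not_ge <| by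
    clear hab
    induction hba with
    | refl => exact le_rfl
    | tail _ h ih => exact (hf _ _ h).le.trans' ih

/-- The number of ancestors of a node: a topological ranking of the DAG. -/
noncomputable def ancCount (D : Dag V) (v : V) : ℕ := {u | D.Anc u v}.ncard

theorem ancCount_lt [Finite V] (h : D.edge a b) : D.ancCount a < D.ancCount b :=
  Set.ncard_lt_ncard ⟨fun _ hu => ReflTransGen.tail hu h, fun hsub => D.acyclic a b h (hsub .refl)⟩

end Basic

section OpenPaths

variable {D : Dag V} {S : Set V} {a b c s t v w : V} {n : ℕ} {g : ℕ → V}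

/-- Some descendant of `v` lies in `S`. -/
def HasDescIn (D : Dag V) (S : Set V) (v : V) : Prop := ∃ d ∈ S, D.Anc v d

theorem HasDescIn.of_anc (h : D.HasDescIn S b) (hab : D.Anc a b) : D.HasDescIn S a := by
  obtain ⟨d, hdS, hbd⟩ := h
  exact ⟨d, hdS, ReflTransGen.trans hab hbd⟩

/-- A path through the consecutive nodes `a, b, c` is not blocked by `S` at `b`. -/
def IsOpenTriple (D : Dag V) (S : Set V) (a b c : V) : Prop :=
  ((D.edge a b ∧ D.edge c b) ∧ D.HasDescIn S b) ∨ (¬ (D.edge a b ∧ D.edge c b) ∧ b ∉ S)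

theorem IsOpenTriple.symm (h : D.IsOpenTriple S a b c) : D.IsOpenTriple S c b a := by
  rwa [IsOpenTriple, and_comm (a := D.edge c b)]

theorem IsOpenTriple.of_edge (hbc : D.edge b c) (hb : b ∉ S) : D.IsOpenTriple S a b c :=
  .inr ⟨fun h => edge_asymm hbc h.2, hb⟩

theorem IsOpenTriple.hasDescIn (h : D.IsOpenTriple S a b c) (hab : D.edge a b)
    (hcb : D.edge c b) : D.HasDescIn S b :=
  (h.resolve_right fun h' => h'.1 ⟨hab, hcb⟩).2

theorem IsOpenTriple.notMem (h : D.IsOpenTriple S a b c) (hba : D.edge b a) : b ∉ S :=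
  (h.resolve_left fun h' => edge_asymm hba h'.1.1).2

/-- The sequence `g 0, …, g n`, in which nodes may recur, is a walk not blocked by `S`. -/
structure IsOpenWalk (D : Dag V) (S : Set V) (n : ℕ) (g : ℕ → V) : Prop where
  adj : ∀ i < n, D.Adj (g i) (g (i + 1))
  isOpen : ∀ i, i + 2 ≤ n → D.IsOpenTriple S (g i) (g (i + 1)) (g (i + 2))

/-- The sequence `g 0, …, g n` is a path from `s` to `t` not blocked by `S`. -/
structure IsOpenPath (D : Dag V) (S : Set V) (s t : V) (n : ℕ) (g : ℕ → V) : Prop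
    extends IsOpenWalk D S n g where
  injOn : (Set.Iic n).InjOn g
  first : g 0 = s
  last : g n = t

theorem not_blocked_iff (p : GPath D.Adj s t) :
    ¬ p.Blocked D S ↔ ∀ (i : ℕ) (_ : i + 2 ≤ p.n),
      D.IsOpenTriple S (p.f ⟨i, by omega⟩) (p.f ⟨i + 1, by omega⟩) (p.f ⟨i + 2, by omega⟩) := by
  have colliderAt_iff (i : ℕ) (hi : i + 2 ≤ p.n) : p.ColliderAt D.edge (i + 1) ↔
      D.edge (p.f ⟨i, by omega⟩) (p.f ⟨i + 1, by omega⟩) ∧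
        D.edge (p.f ⟨i + 2, by omega⟩) (p.f ⟨i + 1, by omega⟩) :=
    ⟨fun ⟨_, _, h⟩ => h, fun h => ⟨i.succ_pos, hi, h⟩⟩
  constructor
  · intro hp i hi
    by_contra hblocked
    refine hp ⟨i + 1, i.succ_pos, hi, ?_⟩
    simp only [IsOpenTriple, ← colliderAt_iff i hi, HasDescIn] at hblocked
    grind
  · rintro hp ⟨i, hpos, hlt, hblocked⟩
    obtain ⟨i, rfl⟩ := Nat.exists_eq_add_of_le' hpos
    have hopen := hp i hlt
    simp only [IsOpenTriple, ← colliderAt_iff i hlt, HasDescIn] at hopen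
    grind

theorem not_dSep_iff_exists_isOpenPath :
    ¬ D.dSep s t S ↔ ∃ n g, D.IsOpenPath S s t n g := by
  simp only [dSep, not_forall, not_blocked_iff]
  constructor
  · rintro ⟨p, hp⟩
    have min_eq {i : ℕ} (hi : i ≤ p.n) : p.f ⟨min i p.n, by omega⟩ = p.f ⟨i, by omega⟩ := by
      congr
      exact min_eq_left hi
    refine ⟨p.n, fun i => p.f ⟨min i p.n, by omega⟩, ⟨fun i hi => ?_, fun i hi => ?_⟩,
      fun i hi j hj hij => ?_, ?_, ?_⟩
    · rw [min_eq hi.le, min_eq hi]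
      exact p.adj ⟨i, hi⟩
    · rw [min_eq (by omega), min_eq (by omega), min_eq hi]
      exact hp i hi
    · have heq := congrArg Fin.val (p.inj hij)
      simpa only [min_eq_left (Set.mem_Iic.1 hi), min_eq_left (Set.mem_Iic.1 hj)] using heq
    · exact (min_eq p.n.zero_le).trans p.first
    · exact (min_eq le_rfl).trans p.last
  · rintro ⟨n, g, hg⟩
    refine ⟨⟨n, fun i => g i, fun i j hij => Fin.ext ?_, hg.first, hg.last,
      fun i => hg.adj i i.isLt⟩, hg.isOpen⟩
    exact hg.injOn (Nat.lt_succ_iff.1 i.isLt) (Nat.lt_succ_iff.1 j.isLt) hij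

/-- Reachability of `v` from `s` by walks not blocked by `S` (the Bayes ball algorithm). The Boolean
tells whether the last edge points into `v`; walks may reverse at nodes of `S`, which subsumes
passing through a collider with a descendant in `S`. The start `s` may be passed freely. -/
inductive Reach (D : Dag V) (S : Set V) (s : V) : V → Bool → Prop
  | start : Reach D S s s false
  | fwd {v w : V} {d : Bool} (h : Reach D S s v d) (hv : v ∈ S → v = s) (hvw : D.edge v w) :
      Reach D S s w true
  | bwd {v w : V} (h : Reach D S s v false) (hv : v ∈ S → v = s) (hwv : D.edge w v) :
      Reach D S s w false
  | reverse {v w : V} (h : Reach D S s v true) (hv : v ∈ S) (hwv : D.edge w v) :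
      Reach D S s w false

theorem Reach.of_hasDescIn (h : D.Reach S s v true) (hv : D.HasDescIn S v) (hwv : D.edge w v) :
    D.Reach S s w false := by
  obtain ⟨d, hdS, hvd⟩ := hv
  induction hvd using ReflTransGen.head_induction_on generalizing w with
  | refl => exact .reverse h hdS hwv
  | @head v u hvu _ ih =>
    by_cases hvS : v ∈ S
    · exact .reverse h hvS hwv
    · have hvs : v ∈ S → v = s := fun hv => absurd hv hvS
      exact .bwd (ih (.fwd h hvs hvu) hvu) hvs hwv

theorem IsOpenWalk.exists_reach (hg : D.IsOpenWalk S n g) : ∃ d, D.Reach S (g 0) (g n) d := by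
  have exists_reach_succ (i : ℕ) (hi : i + 1 ≤ n) : ∃ d, D.Reach S (g 0) (g (i + 1)) d ∧
      if d then D.edge (g i) (g (i + 1)) else D.edge (g (i + 1)) (g i) := by
    induction i with
    | zero =>
      rcases hg.adj 0 hi with e | e
      · exact ⟨true, .fwd .start (fun _ => rfl) e, e⟩
      · exact ⟨false, .bwd .start (fun _ => rfl) e, e⟩
    | succ i ih =>
      obtain ⟨d, hreach, hd⟩ := ih (by omega)
      have hopen := hg.isOpen i hi
      rcases hg.adj (i + 1) hi with e | e
      · exact ⟨true, .fwd hreach (fun h => absurd h (hopen.symm.notMem e)) e, e⟩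
      · cases d with
        | true => exact ⟨false, hreach.of_hasDescIn (hopen.hasDescIn hd e) e, e⟩
        | false => exact ⟨false, .bwd hreach (fun h => absurd h (hopen.notMem hd)) e, e⟩
  cases n with
  | zero => exact ⟨false, .start⟩
  | succ n =>
    obtain ⟨d, hreach, -⟩ := exists_reach_succ n le_rfl
    exact ⟨d, hreach⟩

theorem IsOpenWalk.mono {m : ℕ} (hg : D.IsOpenWalk S n g) (hmn : m ≤ n) : D.IsOpenWalk S m g :=
  ⟨fun i hi => hg.adj i (hi.trans_le hmn), fun i hi => hg.isOpen i (hi.trans hmn)⟩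

theorem update_succ_of_le {i : ℕ} (hi : i ≤ n) : Function.update g (n + 1) w i = g i :=
  Function.update_of_ne (by omega) _ _

theorem IsOpenWalk.snoc (hg : D.IsOpenWalk S n g) (hadj : D.Adj (g n) w)
    (hopen : ∀ m, n = m + 1 → D.IsOpenTriple S (g m) (g n) w) :
    D.IsOpenWalk S (n + 1) (Function.update g (n + 1) w) := by
  refine ⟨fun i hi => ?_, fun i hi => ?_⟩
  · rw [update_succ_of_le (by omega)]
    rcases (Nat.lt_succ_iff.1 hi).lt_or_eq with hi | rfl
    · rw [update_succ_of_le hi]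
      exact hg.adj i hi
    · rwa [Function.update_self]
  · rw [update_succ_of_le (by omega), update_succ_of_le (by omega)]
    rcases (Nat.le_of_succ_le_succ hi).lt_or_eq with hi | rfl
    · rw [update_succ_of_le hi]
      exact hg.isOpen i hi
    · rw [Function.update_self]
      exact hopen i rfl

theorem IsOpenWalk.hasDescIn_of_edge_of_edge {i j : ℕ} (hg : D.IsOpenWalk S n g) (hij : i ≤ j)
    (hj : j < n) (hi : D.edge (g i) (g (i + 1))) (hj' : D.edge (g (j + 1)) (g j)) :
    D.HasDescIn S (g i) := by
  -- The walk leaves `g i` forwards, and where it first turns around it has a collider.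
  induction hij using Nat.decreasingInduction with
  | self => exact absurd hj' (edge_asymm hi)
  | of_succ i hij ih =>
    have hsucc : D.HasDescIn S (g (i + 1)) := by
      rcases hg.adj (i + 1) (by omega) with e | e
      · exact ih e
      · exact (hg.isOpen i (by omega)).hasDescIn hi e
    exact hsucc.of_anc (.single hi)

/-- A path that enters `v` from `u` can be continued by the same edges as a walk in the state
`(v, d)` of `Reach`. -/
def IsEntry (D : Dag V) (S : Set V) (u v : V) : Bool → Prop
  | true => D.edge u v ∨ v ∉ S
  | false => D.edge v u ∨ D.HasDescIn S v

theorem IsOpenPath.snoc (hg : D.IsOpenPath S s v n g) (hvw : D.Adj v w)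
    (hopen : ∀ m, n = m + 1 → D.IsOpenTriple S (g m) v w) (hw : ∀ i ≤ n, g i ≠ w) :
    D.IsOpenPath S s w (n + 1) (Function.update g (n + 1) w) := by
  obtain ⟨hwalk, hinj, rfl, rfl⟩ := hg
  refine ⟨hwalk.snoc hvw hopen, ?_, update_succ_of_le n.zero_le, Function.update_self ..⟩
  grind [Set.InjOn]

/-- A walk which returns to `g (i + 1)` can be cut there: what may follow after the return may also
follow after the first visit. -/
theorem IsOpenWalk.isEntry_of_return {i : ℕ} {d : Bool} (hg : D.IsOpenWalk S n g) (hi : i + 1 < n)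
    (hopen : ∀ m, n = m + 1 → D.IsOpenTriple S (g m) (g n) (g (i + 1)))
    (hd : if d then D.edge (g n) (g (i + 1)) else D.edge (g (i + 1)) (g n)) :
    D.IsEntry S (g i) (g (i + 1)) d := by
  have hadj := hg.adj i (by omega)
  have htriple := hg.isOpen i hi
  cases d with
  | true => exact hadj.imp_right htriple.notMem
  | false =>
    refine hadj.symm.imp_right fun e => ?_
    rcases hg.adj (i + 1) hi with e' | e'
    · have hsnoc := (hg.snoc (.inr hd) hopen).hasDescIn_of_edge_of_edge hi.le n.lt_succ_self
      rw [update_succ_of_le hi.le, update_succ_of_le hi, update_succ_of_le le_rfl,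
        Function.update_self] at hsnoc
      exact hsnoc e' hd
    · exact htriple.hasDescIn e e'

theorem IsOpenPath.exists_isOpenPath_of_adj {d : Bool} (hg : D.IsOpenPath S s v n g)
    (hopen : ∀ m, n = m + 1 → D.IsOpenTriple S (g m) v w)
    (hd : if d then D.edge v w else D.edge w v) :
    ∃ n' g', D.IsOpenPath S s w n' g' ∧ ∀ m, n' = m + 1 → D.IsEntry S (g' m) w d := by
  have hadj : D.Adj v w := by
    cases d with
    | true => exact .inl hd
    | false => exact .inr hd
  by_cases hw : ∃ i ≤ n, g i = w
  · obtain ⟨i, hin, rfl⟩ := hw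
    have hlt : i < n := hin.lt_of_ne fun h => hadj.ne (by rw [h, hg.last])
    refine ⟨i, g, ⟨hg.mono hin, hg.injOn.mono (Set.Iic_subset_Iic.2 hin), hg.first, rfl⟩, ?_⟩
    rintro m rfl
    obtain ⟨hwalk, -, -, rfl⟩ := hg
    exact hwalk.isEntry_of_return hlt hopen hd
  · push Not at hw
    refine ⟨n + 1, Function.update g (n + 1) w, hg.snoc hadj hopen hw, ?_⟩
    intro m hm
    obtain rfl := Nat.succ_injective hm
    rw [update_succ_of_le le_rfl, hg.last]
    cases d with
    | true => exact .inl hd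
    | false => exact .inl hd

theorem Reach.exists_isOpenPath {d : Bool} (h : D.Reach S s v d) :
    ∃ n g, D.IsOpenPath S s v n g ∧ ∀ m, n = m + 1 → D.IsEntry S (g m) v d := by
  have notMem {v : V} {n : ℕ} {g : ℕ → V} (hg : D.IsOpenPath S s v n g) {m : ℕ} (hm : n = m + 1)
      (hv : v ∈ S → v = s) : v ∉ S := fun hvS => by
    have h0 : n = 0 := hg.injOn (Set.mem_Iic.2 le_rfl) (Set.mem_Iic.2 n.zero_le)
      (by rw [hg.first, hg.last, hv hvS])
    omega
  induction h with
  | start =>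
    refine ⟨0, fun _ => s, ⟨⟨fun i hi => ?_, fun i hi => ?_⟩, ?_, rfl, rfl⟩, fun m hm => ?_⟩
    · omega
    · omega
    · exact fun i hi j hj _ => (Nat.le_zero.1 hi).trans (Nat.le_zero.1 hj).symm
    · omega
  | fwd _ hv hvw ih =>
    obtain ⟨n, g, hg, -⟩ := ih
    exact hg.exists_isOpenPath_of_adj (d := true) (fun m hm => .of_edge hvw (notMem hg hm hv)) hvw
  | @bwd v w _ hv hwv ih =>
    obtain ⟨n, g, hg, hentry⟩ := ih
    refine hg.exists_isOpenPath_of_adj (d := false) (fun m hm => ?_) hwv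
    by_cases hcol : D.edge (g m) v
    · exact .inl ⟨⟨hcol, hwv⟩, (hentry m hm).resolve_left (edge_asymm hcol)⟩
    · exact .inr ⟨fun h => hcol h.1, notMem hg hm hv⟩
  | reverse _ hv hwv ih =>
    obtain ⟨n, g, hg, hentry⟩ := ih
    refine hg.exists_isOpenPath_of_adj (d := false) (fun m hm => ?_) hwv
    exact .inl ⟨⟨(hentry m hm).resolve_right (not_not.2 hv), hwv⟩, _, hv, .refl⟩

theorem dSep_iff_forall_not_reach : D.dSep s t S ↔ ∀ d, ¬ D.Reach S s t d := by
  rw [← not_iff_not, not_dSep_iff_exists_isOpenPath]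
  push Not
  constructor
  · rintro ⟨n, g, ⟨hwalk, -, rfl, rfl⟩⟩
    exact hwalk.exists_reach
  · rintro ⟨d, h⟩
    obtain ⟨n, g, hg, -⟩ := h.exists_isOpenPath
    exact ⟨n, g, hg⟩

end OpenPaths

section Pattern

variable {D D' : Dag V} {S : Set V} {a b c : V}

/-- `a → b ← c` is an unshielded collider: its ends are distinct and not adjacent. -/
structure IsUnshieldedCollider (D : Dag V) (a b c : V) : Prop where
  left : D.edge a b
  right : D.edge c b
  not_adj : ¬ D.Adj a c
  ne : a ≠ c

theorem IsUnshieldedCollider.symm (h : D.IsUnshieldedCollider a b c) :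
    D.IsUnshieldedCollider c b a :=
  ⟨h.right, h.left, fun hca => h.not_adj hca.symm, h.ne.symm⟩

/-- Two DAGs have the same pattern: the same skeleton and the same unshielded colliders. -/
structure SamePattern (D D' : Dag V) : Prop where
  adj_iff : ∀ a b, D.Adj a b ↔ D'.Adj a b
  collider_iff : ∀ a b c, D.IsUnshieldedCollider a b c ↔ D'.IsUnshieldedCollider a b c

namespace SamePattern

theorem refl (D : Dag V) : D.SamePattern D := ⟨fun _ _ => .rfl, fun _ _ _ => .rfl⟩

theorem symm (h : D.SamePattern D') : D'.SamePattern D :=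
  ⟨fun a b => (h.adj_iff a b).symm, fun a b c => (h.collider_iff a b c).symm⟩

theorem trans {D'' : Dag V} (h : D.SamePattern D') (h' : D'.SamePattern D'') :
    D.SamePattern D'' :=
  ⟨fun a b => (h.adj_iff a b).trans (h'.adj_iff a b),
    fun a b c => (h.collider_iff a b c).trans (h'.collider_iff a b c)⟩

end SamePattern

theorem not_dSep_of_adj (h : D.Adj a b) (S : Set V) : ¬ D.dSep a b S := by
  rw [dSep_iff_forall_not_reach]
  intro hsep
  rcases h with hab | hba
  · exact hsep _ (.fwd .start (fun _ => rfl) hab)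
  · exact hsep _ (.bwd .start (fun _ => rfl) hba)

theorem Reach.eq_or_edge_or_anc {v : V} {d : Bool} (h : D.Reach (D.Pa a) a v d) :
    v = a ∨ (d = false ∧ D.edge v a) ∨ (d = true ∧ D.Anc a v) := by
  induction h with
  | start => exact .inl rfl
  | fwd _ hv hvw ih =>
    rcases ih with rfl | ⟨-, hva⟩ | ⟨-, hav⟩
    · exact .inr (.inr ⟨rfl, .single hvw⟩)
    · exact .inr (.inr ⟨rfl, hv hva ▸ .single hvw⟩)
    · exact .inr (.inr ⟨rfl, .tail hav hvw⟩)
  | bwd _ hv hwv ih =>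
    rcases ih with rfl | ⟨-, hva⟩ | ⟨hd, -⟩
    · exact .inr (.inl ⟨rfl, hwv⟩)
    · exact .inr (.inl ⟨rfl, hv hva ▸ hwv⟩)
    · cases hd
  | reverse _ hv hwv ih =>
    rcases ih with rfl | ⟨hd, -⟩ | ⟨-, hav⟩
    · exact .inr (.inl ⟨rfl, hwv⟩)
    · cases hd
    · exact absurd hav (D.acyclic _ a hv)

theorem dSep_pa (hadj : ¬ D.Adj a b) (hne : a ≠ b) (hanc : ¬ D.Anc a b) :
    D.dSep a b (D.Pa a) := by
  refine dSep_iff_forall_not_reach.2 fun d hd => ?_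
  rcases hd.eq_or_edge_or_anc with hba | ⟨-, hba⟩ | ⟨-, hab⟩
  · exact hne hba.symm
  · exact hadj (.inr hba)
  · exact hanc hab

theorem exists_dSep_of_not_adj (hadj : ¬ D.Adj a b) (hne : a ≠ b) :
    ∃ S, D.dSep a b S ∨ D.dSep b a S := by
  by_cases hab : D.Anc a b
  · have hba : ¬ D.Anc b a := fun hba => by
      obtain rfl | ⟨c, hac, hcb⟩ := ReflTransGen.cases_head hab
      · exact hne rfl
      · exact D.acyclic a c hac (ReflTransGen.trans hcb hba)
    exact ⟨D.Pa b, .inr (dSep_pa (fun h => hadj h.symm) hne.symm hba)⟩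
  · exact ⟨D.Pa a, .inl (dSep_pa hadj hne hab)⟩

theorem MEquiv.refl (D : Dag V) : D.MEquiv D := fun _ _ _ => .rfl

theorem MEquiv.symm (h : D.MEquiv D') : D'.MEquiv D := fun s t S => (h s t S).symm

theorem MEquiv.trans {D'' : Dag V} (h : D.MEquiv D') (h' : D'.MEquiv D'') : D.MEquiv D'' :=
  fun s t S => (h s t S).trans (h' s t S)

theorem MEquiv.adj (h : D.MEquiv D') (hab : D.Adj a b) : D'.Adj a b := by
  by_contra hadj
  obtain ⟨S, hS | hS⟩ := exists_dSep_of_not_adj hadj hab.ne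
  · exact not_dSep_of_adj hab S ((h a b S).2 hS)
  · exact not_dSep_of_adj hab.symm S ((h b a S).2 hS)

theorem dSep.notMem_of_collider (hS : D.dSep a c S) (hab : D.edge a b) (hcb : D.edge c b) :
    b ∉ S := fun hb =>
  dSep_iff_forall_not_reach.1 hS _ (.reverse (.fwd .start (fun _ => rfl) hab) hb hcb)

theorem dSep.collider_of_notMem (hS : D.dSep a c S) (hb : b ∉ S) (hab : D.Adj a b)
    (hcb : D.Adj c b) : D.edge a b ∧ D.edge c b := by
  rw [dSep_iff_forall_not_reach] at hS
  have not_edge_bc {d : Bool} (hreach : D.Reach S a b d) : ¬ D.edge b c := fun hbc =>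
    hS _ (.fwd hreach (fun h => absurd h hb) hbc)
  rcases hab with hab | hba
  · exact ⟨hab, hcb.resolve_right (not_edge_bc (.fwd .start (fun _ => rfl) hab))⟩
  · have hreach : D.Reach S a b false := .bwd .start (fun _ => rfl) hba
    exact (hcb.elim (fun hcb => hS _ (.bwd hreach (fun h => absurd h hb) hcb))
      (not_edge_bc hreach)).elim

theorem MEquiv.isUnshieldedCollider (h : D.MEquiv D') (hc : D.IsUnshieldedCollider a b c) :
    D'.IsUnshieldedCollider a b c := by
  have of_dSep {a c : V} (hc : D.IsUnshieldedCollider a b c) {S : Set V} (hS : D.dSep a c S) :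
      D'.IsUnshieldedCollider a b c := by
    obtain ⟨hab, hcb⟩ := ((h a c S).1 hS).collider_of_notMem
      (hS.notMem_of_collider hc.left hc.right) (h.adj (.inl hc.left)) (h.adj (.inl hc.right))
    exact ⟨hab, hcb, fun hac => hc.not_adj (h.symm.adj hac), hc.ne⟩
  obtain ⟨S, hS | hS⟩ := exists_dSep_of_not_adj hc.not_adj hc.ne
  · exact of_dSep hc hS
  · exact (of_dSep hc.symm hS).symm

theorem MEquiv.samePattern (h : D.MEquiv D') : D.SamePattern D' :=
  ⟨fun _ _ => ⟨h.adj, h.symm.adj⟩,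
    fun _ _ _ => ⟨h.isUnshieldedCollider, h.symm.isUnshieldedCollider⟩⟩

end Pattern

section CoveredReversal

variable {D D' : Dag V} {S : Set V} {a b c s v w x y z : V}

/-- The edge `x → y` of `D` is covered: apart from `x`, its endpoints have the same parents. -/
structure IsCoveredEdge (D : Dag V) (x y : V) : Prop where
  edge : D.edge x y
  edge_iff : ∀ z, z ≠ x → (D.edge z y ↔ D.edge z x)

/-- `D'` arises from `D` by reversing the covered edge `x → y`. -/
structure IsCoveredReversal (D D' : Dag V) (x y : V) : Prop extends IsCoveredEdge D x y where
  edge_reversed : D'.edge y x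
  edge_iff_edge : ∀ a b, ¬ (a = x ∧ b = y) → ¬ (a = y ∧ b = x) → (D.edge a b ↔ D'.edge a b)

theorem IsCoveredEdge.exists_isCoveredReversal [Finite V] (h : D.IsCoveredEdge x y) :
    ∃ D', D.IsCoveredReversal D' x y := by
  classical
  -- the factor 2 makes room for `x` just above its former rank, which goes to `y`
  let rank (v : V) : ℕ :=
    if v = y then 2 * D.ancCount x else if v = x then 2 * D.ancCount x + 1 else 2 * D.ancCount v
  have hne : x ≠ y := fun hxy => D.edge_irrefl y (hxy ▸ h.edge)
  have hxy : D.ancCount x < D.ancCount y := ancCount_lt h.edge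
  refine ⟨ofRank (fun a b => (D.edge a b ∧ ¬ (a = x ∧ b = y)) ∨ (a = y ∧ b = x)) rank ?_,
    h, .inr ⟨rfl, rfl⟩, fun a b hab hba => ⟨fun e => .inl ⟨e, hab⟩, fun e => ?_⟩⟩
  · rintro a b (⟨hab, hn⟩ | ⟨rfl, rfl⟩)
    · have hlt := ancCount_lt hab
      by_cases hb : b = y
      · subst hb
        have hax : a ≠ x := fun ha => hn ⟨ha, rfl⟩
        have hlt' := ancCount_lt ((h.edge_iff a hax).1 hab)
        have := (Adj.ne (.inl hab) : a ≠ b)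
        grind
      · grind
    · grind
  · exact (e.resolve_right hba).1

namespace IsCoveredReversal

theorem ne (h : D.IsCoveredReversal D' x y) : x ≠ y := Adj.ne (.inl h.edge)

theorem symm (h : D.IsCoveredReversal D' x y) : D'.IsCoveredReversal D y x := by
  refine ⟨⟨h.edge_reversed, fun z hzy => ?_⟩, h.edge,
    fun a b hba hab => (h.edge_iff_edge a b hab hba).symm⟩
  by_cases hzx : z = x
  · rw [hzx]
    exact iff_of_false (D'.edge_irrefl x) (edge_asymm h.edge_reversed)
  · rw [← h.edge_iff_edge z x (fun h => hzx h.1) (fun h => hzy h.1),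
      ← h.edge_iff_edge z y (fun h => hzx h.1) (fun h => hzy h.1), h.edge_iff z hzx]

theorem edge_of_edge (h : D.IsCoveredReversal D' x y) (hab : D.edge a b)
    (hn : ¬ (a = x ∧ b = y)) : D'.edge a b := by
  refine (h.edge_iff_edge a b hn ?_).1 hab
  rintro ⟨rfl, rfl⟩
  exact edge_asymm h.edge hab

theorem edges_of_parent (h : D.IsCoveredReversal D' x y) (hzx : z ≠ x)
    (hz : D.edge z x ∨ D.edge z y) : D'.edge z x ∧ D'.edge z y := by
  rw [h.edge_iff z hzx, or_self] at hz
  exact ⟨h.edge_of_edge hz fun h' => hzx h'.1,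
    h.edge_of_edge ((h.edge_iff z hzx).2 hz) fun h' => hzx h'.1⟩

theorem adj (h : D.IsCoveredReversal D' x y) (hab : D.Adj a b) : D'.Adj a b := by
  have adj_of_edge {a b : V} (hab : D.edge a b) : D'.Adj a b := by
    by_cases hn : a = x ∧ b = y
    · rw [hn.1, hn.2]
      exact .inr h.edge_reversed
    · exact .inl (h.edge_of_edge hab hn)
  exact hab.elim adj_of_edge fun hba => (adj_of_edge hba).symm

theorem isUnshieldedCollider (h : D.IsCoveredReversal D' x y)
    (hc : D.IsUnshieldedCollider a b c) : D'.IsUnshieldedCollider a b c := by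
  have edge_left {a c : V} (hc : D.IsUnshieldedCollider a b c) : D'.edge a b := by
    refine h.edge_of_edge hc.left ?_
    rintro ⟨rfl, rfl⟩
    exact hc.not_adj (.inr ((h.edge_iff c hc.ne.symm).1 hc.right))
  exact ⟨edge_left hc, edge_left hc.symm, fun hac => hc.not_adj (h.symm.adj hac), hc.ne⟩

theorem samePattern (h : D.IsCoveredReversal D' x y) : D.SamePattern D' :=
  ⟨fun _ _ => ⟨h.adj, h.symm.adj⟩,
    fun _ _ _ => ⟨h.isUnshieldedCollider, h.symm.isUnshieldedCollider⟩⟩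

end IsCoveredReversal

/-- The trace left in `D'`, where the edge between `x` and `y` points to `x`, by a visit to `v` of
an open walk in `D`, where it points to `y`; as in `Reach`, the flag tells whether the walk has
entered `v` along an edge into `v`. The visit itself is matched except at `x` and `y`, where the
walk in `D'` may have to stand at the other end of the edge. -/
inductive ReachTrace (D' : Dag V) (S : Set V) (s x y : V) : V → Bool → Prop
  | out {v : V} (hv : D'.Reach S s v false) : ReachTrace D' S s x y v false
  | elsewhere {v : V} (hv : D'.Reach S s v true) (hvx : v ≠ x) (hvy : v ≠ y) :
      ReachTrace D' S s x y v true
  | both {v : V} (hvxy : v = x ∨ v = y) (hx : D'.Reach S s x true) (hy : D'.Reach S s y true) :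
      ReachTrace D' S s x y v true
  | tailOfBoth (hx : D'.Reach S s x true) (hy : D'.Reach S s y true) (hyS : y ∈ S) :
      ReachTrace D' S s x y x false
  | tailOfHead (hy : D'.Reach S s y false) (hyS : y ∈ S → y = s) : ReachTrace D' S s x y x false
  | headOfTail (hx : D'.Reach S s x false) (hxS : x ∈ S → x = s) : ReachTrace D' S s x y y true
  | headOfHead (hy : D'.Reach S s y false) (hyS : y ∈ S → y = s) : ReachTrace D' S s x y y true

namespace IsCoveredReversal

theorem exists_reach_of_trace (h : D.IsCoveredReversal D' x y) {d : Bool}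
    (hv : D'.ReachTrace S s x y v d) : ∃ d', D'.Reach S s v d' := by
  cases hv with
  | out hv => exact ⟨_, hv⟩
  | elsewhere hv => exact ⟨_, hv⟩
  | both hvxy hx hy => rcases hvxy with rfl | rfl <;> exact ⟨_, ‹_›⟩
  | tailOfBoth hx => exact ⟨_, hx⟩
  | tailOfHead hy hyS => exact ⟨_, .fwd hy hyS h.edge_reversed⟩
  | headOfTail hx hxS => exact ⟨_, .bwd hx hxS h.edge_reversed⟩
  | headOfHead hy => exact ⟨_, hy⟩

theorem trace_fwd (h : D.IsCoveredReversal D' x y) {d : Bool}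
    (hv : D'.ReachTrace S s x y v d) (hvS : v ∈ S → v = s) (hvw : D.edge v w) :
    D'.ReachTrace S s x y w true := by
  have hne := h.ne
  by_cases hn : v = x ∧ w = y
  · obtain ⟨rfl, rfl⟩ := hn
    cases hv with
    | out hx => exact .headOfTail hx hvS
    | elsewhere _ hvx => exact absurd rfl hvx
    | both _ hx hy => exact .both (.inr rfl) hx hy
    | tailOfBoth hx hy => exact .both (.inr rfl) hx hy
    | tailOfHead hy hyS => exact .headOfHead hy hyS
    | headOfTail | headOfHead => exact absurd rfl hne
  · obtain ⟨d', hv'⟩ := h.exists_reach_of_trace hv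
    by_cases hw : w = x ∨ w = y
    · have hvx : v ≠ x := fun hvx => hn ⟨hvx, hw.resolve_left (hvx ▸ (Adj.ne (.inl hvw)).symm)⟩
      have hv_parent : D.edge v x ∨ D.edge v y := by
        rcases hw with rfl | rfl
        · exact .inl hvw
        · exact .inr hvw
      obtain ⟨hx, hy⟩ := h.edges_of_parent hvx hv_parent
      exact .both hw (.fwd hv' hvS hx) (.fwd hv' hvS hy)
    · rw [not_or] at hw
      exact .elsewhere (.fwd hv' hvS (h.edge_of_edge hvw hn)) hw.1 hw.2

theorem trace_bwd (h : D.IsCoveredReversal D' x y) (hv : D'.ReachTrace S s x y v false)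
    (hvS : v ∈ S → v = s) (hwv : D.edge w v) : D'.ReachTrace S s x y w false := by
  cases hv with
  | out hv =>
    by_cases hn : w = x ∧ v = y
    · obtain ⟨rfl, rfl⟩ := hn
      exact .tailOfHead hv hvS
    · exact .out (.bwd hv hvS (h.edge_of_edge hwv hn))
  | tailOfBoth _ hy hyS =>
    exact .out (.reverse hy hyS (h.edges_of_parent (Adj.ne (.inl hwv)) (.inl hwv)).2)
  | tailOfHead hy hyS =>
    exact .out (.bwd hy hyS (h.edges_of_parent (Adj.ne (.inl hwv)) (.inl hwv)).2)

theorem trace_reverse (h : D.IsCoveredReversal D' x y) (hv : D'.ReachTrace S s x y v true)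
    (hvS : v ∈ S) (hwv : D.edge w v) : D'.ReachTrace S s x y w false := by
  by_cases hn : w = x ∧ v = y
  · have hne := h.ne
    obtain ⟨rfl, rfl⟩ := hn
    cases hv with
    | elsewhere _ _ hvy => exact absurd rfl hvy
    | both _ hx hy => exact .tailOfBoth hx hy hvS
    | headOfTail hx => exact .out hx
    | headOfHead hy hyS => exact .tailOfHead hy hyS
  · have hwv' := h.edge_of_edge hwv hn
    cases hv with
    | elsewhere hv => exact .out (.reverse hv hvS hwv')
    | both hvxy hx hy => rcases hvxy with rfl | rfl <;> exact .out (.reverse ‹_› hvS hwv')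
    | headOfTail hx hxS =>
      exact .out (.bwd hx hxS (h.edges_of_parent (fun hwx => hn ⟨hwx, rfl⟩) (.inr hwv)).1)
    | headOfHead hy hyS => exact .out (.bwd hy hyS hwv')

theorem trace_of_reach (h : D.IsCoveredReversal D' x y) {d : Bool} (hv : D.Reach S s v d) :
    D'.ReachTrace S s x y v d := by
  induction hv with
  | start => exact .out .start
  | fwd _ hvS hvw ih => exact h.trace_fwd ih hvS hvw
  | bwd _ hvS hwv ih => exact h.trace_bwd ih hvS hwv
  | reverse _ hvS hwv ih => exact h.trace_reverse ih hvS hwv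

theorem dSep_of_dSep (h : D.IsCoveredReversal D' x y) (hD' : D'.dSep s v S) : D.dSep s v S := by
  rw [dSep_iff_forall_not_reach] at hD' ⊢
  intro d hv
  obtain ⟨d', hv'⟩ := h.exists_reach_of_trace (h.trace_of_reach hv)
  exact hD' d' hv'

theorem mequiv (h : D.IsCoveredReversal D' x y) : D.MEquiv D' :=
  fun _ _ _ => ⟨h.symm.dSep_of_dSep, h.dSep_of_dSep⟩

end IsCoveredReversal

end CoveredReversal

section Meek

variable {D D' : Dag V} {a b c : V}

/-- The orientations obtained from the pattern of `D` by closing the unshielded colliders under the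
first three of Meek's rules. Only the pattern of `D` enters, not its other edge directions. -/
inductive MeekDir (D : Dag V) : V → V → Prop
  | collider {a b c : V} (h : D.IsUnshieldedCollider a b c) : MeekDir D a b
  | rule1 {d a b : V} (hda : MeekDir D d a) (hab : D.Adj a b) (hdb : ¬ D.Adj d b) (hne : d ≠ b)
      (hcol : ¬ D.IsUnshieldedCollider d a b) : MeekDir D a b
  | rule2 {a d b : V} (had : MeekDir D a d) (hdb : MeekDir D d b) (hab : D.Adj a b) : MeekDir D a b
  | rule3 {a b c d : V} (hcb : MeekDir D c b) (hdb : MeekDir D d b) (hcd : ¬ D.Adj c d)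
      (hne : c ≠ d) (hab : D.Adj a b) (hac : D.Adj a c) (had : D.Adj a d)
      (hcol : ¬ D.IsUnshieldedCollider c a d) : MeekDir D a b

theorem MeekDir.edge_of_samePattern (h : D.MeekDir a b) (hD : D.SamePattern D') :
    D'.edge a b := by
  induction h with
  | @collider a b c h => exact ((hD.collider_iff a b c).1 h).left
  | @rule1 d a b _ hab hdb hne hcol ih =>
    refine ((hD.adj_iff a b).1 hab).resolve_right fun hba => hcol ?_
    exact (hD.collider_iff d a b).2 ⟨ih, hba, (hD.adj_iff d b).not.1 hdb, hne⟩
  | rule2 _ _ hab ihad ihdb => exact edge_trans_of_adj ihad ihdb ((hD.adj_iff _ _).1 hab)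
  | @rule3 a b c d _ _ hcd hne hab hac had hcol ihc ihd =>
    refine ((hD.adj_iff a b).1 hab).resolve_right fun hba => hcol ?_
    have hca : D'.edge c a := edge_trans_of_adj ihc hba ((hD.adj_iff a c).1 hac).symm
    have hda : D'.edge d a := edge_trans_of_adj ihd hba ((hD.adj_iff a d).1 had).symm
    exact (hD.collider_iff c a d).2 ⟨hca, hda, (hD.adj_iff c d).not.1 hcd, hne⟩

theorem MeekDir.edge (h : D.MeekDir a b) : D.edge a b := h.edge_of_samePattern (.refl D)

/-- The edges which Meek's rules leave undirected. -/
def undirGraph (D : Dag V) : SimpleGraph V where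
  Adj a b := D.Adj a b ∧ ¬ D.MeekDir a b ∧ ¬ D.MeekDir b a
  symm := ⟨fun _ _ h => ⟨h.1.symm, h.2.2, h.2.1⟩⟩
  loopless := ⟨fun _ h => h.1.ne rfl⟩

theorem Adj.meekDir_or_undirGraph_adj (h : D.Adj a b) :
    D.MeekDir a b ∨ D.MeekDir b a ∨ D.undirGraph.Adj a b :=
  or_iff_not_imp_left.2 fun hab => or_iff_not_imp_left.2 fun hba => ⟨h, hab, hba⟩

theorem MeekDir.adj_of_undir (hab : D.MeekDir a b) (hbc : D.undirGraph.Adj b c) : D.Adj a c := by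
  by_contra hac
  have hne : a ≠ c := by
    rintro rfl
    exact hbc.2.2 hab
  by_cases hcol : D.IsUnshieldedCollider a b c
  · exact hbc.2.2 (.collider hcol.symm)
  · exact hbc.2.1 (.rule1 hab hbc.1 hac hne hcol)

theorem MeekDir.meekDir_or_undir (hab : D.MeekDir a b) (hbc : D.undirGraph.Adj b c) :
    D.MeekDir a c ∨ D.undirGraph.Adj a c := by
  rcases (hab.adj_of_undir hbc).meekDir_or_undirGraph_adj with hac | hca | hac
  · exact .inl hac
  · exact absurd (.rule2 hca hab hbc.1.symm) hbc.2.2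
  · exact .inr hac

theorem MeekDir.trans_undir (hab : D.MeekDir a b) (hbc : D.undirGraph.Adj b c) :
    D.MeekDir a c := by
  induction hab generalizing c with
  | @collider a b d h =>
    have hab : D.MeekDir a b := .collider h
    have hdb : D.MeekDir d b := .collider h.symm
    by_contra hac
    have hcol : ¬ D.IsUnshieldedCollider a c d := fun h' => hac (.collider h')
    exact hbc.2.2 (.rule3 hab hdb h.not_adj h.ne hbc.1.symm (hab.adj_of_undir hbc).symm
      (hdb.adj_of_undir hbc).symm hcol)
  | rule1 hda hab hdb hne hcol ih =>
    refine ((MeekDir.rule1 hda hab hdb hne hcol).meekDir_or_undir hbc).resolve_right fun hac => ?_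
    exact hdb ((ih hac).adj_of_undir hbc.symm)
  | rule2 had hdb hab _ ih =>
    exact .rule2 had (ih hbc) ((MeekDir.rule2 had hdb hab).adj_of_undir hbc)
  | rule3 hcb hdb hcd hne hab hac had hcol ihc ihd =>
    have hadj := (MeekDir.rule3 hcb hdb hcd hne hab hac had hcol).adj_of_undir hbc
    exact .rule3 (ihc hbc) (ihd hbc) hcd hne hadj hac had hcol

theorem undirGraph_adj_of_common_child (hab : D.undirGraph.Adj a b) (hcb : D.undirGraph.Adj c b)
    (eab : D.edge a b) (ecb : D.edge c b) (hne : a ≠ c) : D.undirGraph.Adj a c := by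
  refine ⟨?_, fun hac => hab.2.1 (hac.trans_undir hcb), fun hca => hcb.2.1 (hca.trans_undir hab)⟩
  by_contra hac
  exact hab.2.1 (.collider ⟨eab, ecb, hac, hne⟩)

theorem undirGraph_isChordal [Finite V] (D : Dag V) : IsChordal D.undirGraph := by
  intro T hT
  obtain ⟨s, hsT, hmax⟩ := T.toFinite.exists_maximalFor D.ancCount T hT
  refine ⟨s, hsT, ?_⟩
  have edge_to_s {u : V} (hu : u ∈ D.undirGraph.neighborSet s ∩ T) : D.edge u s :=
    hu.1.1.resolve_left fun hsu => (hmax hu.2 (ancCount_lt hsu).le).not_gt (ancCount_lt hsu)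
  exact fun a ha b hb hne =>
    undirGraph_adj_of_common_child ha.1.symm hb.1.symm (edge_to_s ha) (edge_to_s hb) hne

/-- The number of nodes from which a node can be reached along Meek orientations. -/
noncomputable def meekDepth (D : Dag V) (v : V) : ℕ := {u | TransGen D.MeekDir u v}.ncard

theorem meekDepth_lt [Finite V] (h : D.MeekDir a b) : D.meekDepth a < D.meekDepth b := by
  have not_transGen_self : ¬ TransGen D.MeekDir a a := fun haa => by
    obtain ⟨u, hau, hua⟩ := TransGen.head'_iff.1 haa
    exact D.acyclic a u hau.edge (ReflTransGen.mono (fun _ _ => MeekDir.edge) _ _ hua)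
  exact Set.ncard_lt_ncard ⟨fun _ hu => TransGen.tail hu h,
    fun hsub => not_transGen_self (hsub (.single h))⟩

theorem meekDepth_eq (h : D.undirGraph.Adj a b) : D.meekDepth a = D.meekDepth b := by
  have transGen_of_adj {u v w : V} (huv : TransGen D.MeekDir u v) (hvw : D.undirGraph.Adj v w) :
      TransGen D.MeekDir u w := by
    obtain ⟨z, huz, hzv⟩ := TransGen.tail'_iff.1 huv
    exact .tail' huz (hzv.trans_undir hvw)
  exact congrArg Set.ncard (Set.ext fun u =>
    ⟨fun hu => transGen_of_adj hu h, fun hu => transGen_of_adj hu h.symm⟩)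

/-- Keep the Meek orientations and direct the remaining edges so as to increase `r`. -/
noncomputable def reorient [Finite V] (D : Dag V) (r : V → ℕ) : Dag V :=
  ofRank (fun a b => D.MeekDir a b ∨ (D.undirGraph.Adj a b ∧ r a < r b))
    (fun v => toLex (D.meekDepth v, r v)) <| by
      rintro a b (hab | ⟨hab, hlt⟩)
      · exact Prod.Lex.toLex_lt_toLex.2 (.inl (meekDepth_lt hab))
      · exact Prod.Lex.toLex_lt_toLex.2 (.inr ⟨meekDepth_eq hab, hlt⟩)

theorem adj_reorient_iff [Finite V] {r : V → ℕ} (hr : r.Injective) :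
    (D.reorient r).Adj a b ↔ D.Adj a b := by
  constructor
  · rintro ((hab | hab) | (hba | hba))
    · exact .inl hab.edge
    · exact hab.1.1
    · exact .inr hba.edge
    · exact hba.1.1.symm
  · intro h
    rcases h.meekDir_or_undirGraph_adj with hab | hba | hab
    · exact .inl (.inl hab)
    · exact .inr (.inl hba)
    · exact (hr.ne h.ne).lt_or_gt.imp (fun hlt => .inr ⟨hab, hlt⟩) fun hlt => .inr ⟨hab.symm, hlt⟩

theorem samePattern_reorient [Finite V] {r : V → ℕ}
    (hr : IsPerfectRanking D.undirGraph Set.univ r) : D.SamePattern (D.reorient r) := by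
  have adj_iff {a b : V} : (D.reorient r).Adj a b ↔ D.Adj a b :=
    adj_reorient_iff (Set.injOn_univ.1 hr.injOn)
  refine ⟨fun a b => adj_iff.symm, fun a b c => ⟨fun h => ?_, fun ⟨hab, hcb, hac, hne⟩ => ?_⟩⟩
  · exact ⟨.inl (.collider h), .inl (.collider h.symm), adj_iff.not.2 h.not_adj, h.ne⟩
  · rw [adj_iff] at hac
    rcases hab with hab | hab <;> rcases hcb with hcb | hcb
    · exact ⟨hab.edge, hcb.edge, hac, hne⟩
    · exact absurd (hab.adj_of_undir hcb.1.symm) hac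
    · exact absurd (hcb.adj_of_undir hab.1.symm).symm hac
    · exact absurd (hr.isClique b trivial ⟨trivial, hab⟩ ⟨trivial, hcb⟩ hne).1 hac

theorem exists_samePattern_edge_of_undir [Finite V] (D : Dag V) (v : V) :
    ∃ D', D.SamePattern D' ∧ ∀ u, D.undirGraph.Adj v u → D'.edge v u := by
  obtain ⟨r, hr, hroot⟩ := D.undirGraph_isChordal.exists_isPerfectRanking (Set.mem_univ v)
  exact ⟨D.reorient r, samePattern_reorient hr,
    fun u hu => .inr ⟨hu, hroot u trivial hu.1.ne.symm⟩⟩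

end Meek

section Characterization

variable {D D' : Dag V} {a b x y : V}

theorem SamePattern.eq_of_forall_edge (h : D.SamePattern D')
    (hedge : ∀ a b, D.edge a b → D'.edge a b) : D = D' := by
  have edge_eq : D.edge = D'.edge := funext₂ fun a b => propext ⟨hedge a b, fun hab =>
    ((h.adj_iff a b).2 (.inl hab)).resolve_right fun hba => edge_asymm hab (hedge b a hba)⟩
  cases D
  cases D'
  congr

theorem SamePattern.isCoveredEdge_of_extremal (h : D.SamePattern D') (hxy : D.edge x y)
    (hyx : D'.edge y x) (hx : ∀ z, D.edge x z → D.edge z y → D'.edge z y)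
    (hy : ∀ a b, D.edge a b → D.edge b y → D'.edge a b) : D.IsCoveredEdge x y := by
  refine ⟨hxy, fun z hzx => ⟨fun hzy => ?_, fun hzx' => ?_⟩⟩
  · have hadj : D.Adj z x := by
      by_contra hadj
      exact edge_asymm hyx ((h.collider_iff z y x).1 ⟨hzy, hxy, hadj, hzx⟩).right
    refine hadj.resolve_right fun hxz => ?_
    exact D'.acyclic y x hyx (.head (hy x z hxz hzy) (.single (hx z hxz hzy)))
  · have hzy : z ≠ y := by
      rintro rfl
      exact edge_asymm hxy hzx'
    refine edge_trans_of_adj hzx' hxy ?_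
    by_contra hadj
    exact edge_asymm hxy ((h.collider_iff z x y).2
      ⟨hy z x hzx' hxy, hyx, (h.adj_iff z y).not.1 hadj, hzy⟩).right

theorem SamePattern.exists_isCoveredEdge [Finite V] (h : D.SamePattern D') (hne : D ≠ D') :
    ∃ x y, D.IsCoveredEdge x y ∧ D'.edge y x := by
  have edge_or {a b : V} (hab : D.edge a b) : D'.edge a b ∨ D'.edge b a :=
    (h.adj_iff a b).1 (.inl hab)
  have hdiff : {y | ∃ x, D.edge x y ∧ D'.edge y x}.Nonempty := by
    by_contra hempty
    exact hne (h.eq_of_forall_edge fun a b hab =>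
      (edge_or hab).resolve_right fun hba => hempty ⟨b, a, hab, hba⟩)
  obtain ⟨y, hy, hmin⟩ := (Set.toFinite _).exists_minimalFor D.ancCount _ hdiff
  obtain ⟨x, ⟨hxy, hyx⟩, hmax⟩ :=
    (Set.toFinite {x | D.edge x y ∧ D'.edge y x}).exists_maximalFor D.ancCount _ hy
  refine ⟨x, y, h.isCoveredEdge_of_extremal hxy hyx (fun z hxz hzy => ?_)
    (fun a b hab hby => ?_), hyx⟩
  · refine (edge_or hzy).resolve_right fun hyz => ?_
    exact (hmax ⟨hzy, hyz⟩ (ancCount_lt hxz).le).not_gt (ancCount_lt hxz)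
  · refine (edge_or hab).resolve_right fun hba => ?_
    exact (hmin ⟨a, hab, hba⟩ (ancCount_lt hby).le).not_gt (ancCount_lt hby)

/-- The edges directed oppositely in the two DAGs. -/
def oppositeEdges (D D' : Dag V) : Set (V × V) := {e | D.edge e.1 e.2 ∧ D'.edge e.2 e.1}

theorem IsCoveredReversal.oppositeEdges_ssubset {D₁ : Dag V} (h : D.IsCoveredReversal D₁ x y)
    (hyx : D'.edge y x) : D₁.oppositeEdges D' ⊂ D.oppositeEdges D' := by
  refine ⟨?_, fun hsub => edge_asymm h.edge_reversed (hsub (a := (x, y)) ⟨h.edge, hyx⟩).1⟩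
  rintro ⟨a, b⟩ ⟨hab, hba⟩
  refine ⟨h.symm.edge_of_edge hab ?_, hba⟩
  rintro ⟨rfl, rfl⟩
  exact edge_asymm hyx hba

theorem SamePattern.mequiv [Finite V] (h : D.SamePattern D') : D.MEquiv D' := by
  induction hn : (D.oppositeEdges D').ncard using Nat.strong_induction_on generalizing D with
  | _ n ih =>
    subst hn
    by_cases heq : D = D'
    · exact heq ▸ .refl D
    · obtain ⟨x, y, hcov, hyx⟩ := h.exists_isCoveredEdge heq
      obtain ⟨D₁, hD₁⟩ := hcov.exists_isCoveredReversal
      have hlt := Set.ncard_lt_ncard (hD₁.oppositeEdges_ssubset hyx)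
      exact hD₁.mequiv.trans (ih _ hlt (hD₁.samePattern.symm.trans h) rfl)

theorem mequiv_iff_samePattern [Finite V] : D.MEquiv D' ↔ D.SamePattern D' :=
  ⟨MEquiv.samePattern, SamePattern.mequiv⟩

theorem cpDir_iff_meekDir [Finite V] : D.CpDir a b ↔ D.MeekDir a b := by
  simp only [CpDir, mequiv_iff_samePattern]
  refine ⟨fun h => ?_, fun h D' hD' => h.edge_of_samePattern hD'⟩
  have hab : D.edge a b := h D (.refl D)
  by_contra hM
  obtain ⟨D', hD', hroot⟩ := D.exists_samePattern_edge_of_undir b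
  have hba : D'.edge b a := hroot a ⟨.inr hab, fun hba => edge_asymm hab hba.edge, hM⟩
  exact edge_asymm hba (h D' hD')

theorem cpUndir_iff_undirGraph_adj [Finite V] : D.CpUndir a b ↔ D.undirGraph.Adj a b := by
  simp only [CpUndir, cpDir_iff_meekDir, undirGraph]

end Characterization

end Dag

/-- If `X` and `W` are distinct nodes joined by an undirected edge in the
CPDAG `G` of the MEC of a DAG, then `Pa_G(X) ⊆ Pa_G(W)`: every node with a directed edge
into `X` in `G` also has a directed edge into `W` in `G`. -/
theorem cpPa_subset_cpPa_of_sibling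
    {V : Type*} [Fintype V] (D : Dag V) (X W : V) (hXW : X ≠ W)
    (hsib : W ∈ D.CpSib X) :
    D.CpPa X ⊆ D.CpPa W := by
  intro p hp
  have hpX : D.MeekDir p X := Dag.cpDir_iff_meekDir.1 hp
  have hundir : D.undirGraph.Adj X W := Dag.cpUndir_iff_undirGraph_adj.1 hsib
  exact Dag.cpDir_iff_meekDir.2 (hpX.trans_undir hundir)
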